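/- arXiv:2206.01920 — 2 statements merged into one kernel-verified Lean document; each statement's English description precedes it below -/
import Mathlib

section
/- Fix N ≥ 1, and for each ω, η ∈ I^N let α_{ωη}, h_{ωη} : SG' × SG'' → ℝ be continuous functions. Let g, g̃ : SG' × SG'' → ℝ be bounded functions, and suppose G, G̃ : SG' × SG'' → ℝ satisfy, for all ω, η ∈ I^N and (t,s) ∈ SG' × SG'', G(L_ω(t), K_η(s)) = α_{ωη}(t,s)·g(t,s) + h_{ωη}(t,s) and G̃(L_ω(t), K_η(s)) = α_{ωη}(t,s)·g̃(t,s) + h_{ωη}(t,s). Then sup_{(t,s) ∈ SG'×SG''} |G(t,s) − G̃(t,s)| ≤ (max_{ω,η ∈ I^N} ‖α_{ωη}‖_∞) · sup_{(t,s) ∈ SG'×SG''} |g(t,s) − g̃(t,s)|. In particular, if max_{ω,η} ‖α_{ωη}‖_∞ < 1, any two continuous functions satisfying the self-referential equation f(L_ω(t),K_η(s)) = α_{ωη}(t,s)f(t,s) + h_{ωη}(t,s) for all ω,η,(t,s) are equal. -/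
noncomputable section

/-- Points of the plane ℝ². -/
abbrev E2 := EuclideanSpace ℝ (Fin 2)

/-- The contraction `L_i(t) = (t + p_i)/2` of the plane towards the vertex `p i`. -/
def Lmap (p : Fin 3 → E2) (i : Fin 3) (t : E2) : E2 := (2 : ℝ)⁻¹ • (t + p i)

/-- `p 1, p 2, p 3` are the vertices of an equilateral triangle: pairwise distinct
points with all three pairwise distances equal. -/
def IsEquilateral (p : Fin 3 → E2) : Prop :=
  Function.Injective p ∧
    ∀ i j k l : Fin 3, i ≠ j → k ≠ l → dist (p i) (p j) = dist (p k) (p l)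

/-- `S` is the Sierpiński gasket with vertex set `p`: the unique nonempty compact set
invariant under the three contractions `L_i(t) = (t + p_i)/2`. -/
def IsSG (p : Fin 3 → E2) (S : Set E2) : Prop :=
  IsEquilateral p ∧ S.Nonempty ∧ IsCompact S ∧ S = ⋃ i : Fin 3, Lmap p i '' S

/-- For a word `ω = ω₁ω₂…ω_n` over `I = {1,2,3}`, the composition
`L_ω = L_{ω₁} ∘ L_{ω₂} ∘ ⋯ ∘ L_{ω_n}`. -/
def wordMap (p : Fin 3 → E2) {n : ℕ} (ω : Fin n → Fin 3) : E2 → E2 :=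
  (List.ofFn fun k => Lmap p (ω k)).foldr (· ∘ ·) id

/-!
Every point of `SG' × SG''` has the form `(L_ω(t), K_η(s))`, because each gasket is the union of
its images under words of length `N`. At such a point the terms `h_{ωη}` cancel in `G - G̃`, leaving
`α_{ωη} · (g - g̃)` at `(t, s)`. If `M` bounds `|f - f̃|` for two solutions `f, f̃` of the
self-referential equation, iterating this estimate gives `|f - f̃| ≤ cⁿ M` for all `n`, which
forces `f = f̃` when `c < 1`.
-/

theorem subset_iUnion_image_foldr_comp {ι X : Type*} {φ : ι → X → X} {S : Set X}
    (hS : S ⊆ ⋃ i, φ i '' S) (n : ℕ) :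
    S ⊆ ⋃ ω : Fin n → ι, (List.ofFn fun k => φ (ω k)).foldr (· ∘ ·) id '' S := by
  intro x hx
  induction n generalizing x with
  | zero => simpa using hx
  | succ n ih =>
    obtain ⟨i, y, hy, rfl⟩ := Set.mem_iUnion.1 (hS hx)
    obtain ⟨ω, t, ht, rfl⟩ := Set.mem_iUnion.1 (ih hy)
    exact Set.mem_iUnion.2 ⟨Fin.cons i ω, t, ht, by simp [List.ofFn_succ]⟩

theorem IsSG.subset_iUnion_image_wordMap {p : Fin 3 → E2} {S : Set E2} (hS : IsSG p S) (n : ℕ) :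
    S ⊆ ⋃ ω : Fin n → Fin 3, wordMap p ω '' S :=
  subset_iUnion_image_foldr_comp hS.2.2.2.subset n

theorem prod_subset_iUnion_image_prodMap {ι κ X X' Y Y' : Type*} {φ : ι → X → X'}
    {ψ : κ → Y → Y'} {S : Set X} {S' : Set X'} {T : Set Y} {T' : Set Y'}
    (hφ : S' ⊆ ⋃ i, φ i '' S) (hψ : T' ⊆ ⋃ j, ψ j '' T) :
    S' ×ˢ T' ⊆ ⋃ k : ι × κ, Prod.map (φ k.1) (ψ k.2) '' (S ×ˢ T) := by
  rintro ⟨x, y⟩ ⟨hx, hy⟩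
  obtain ⟨i, t, ht, rfl⟩ := Set.mem_iUnion.1 (hφ hx)
  obtain ⟨j, s, hs, rfl⟩ := Set.mem_iUnion.1 (hψ hy)
  exact Set.mem_iUnion.2 ⟨(i, j), (t, s), ⟨ht, hs⟩, rfl⟩

/-- `G` is an image of `g` under the Read–Bajraktarević operator with maps `φ i`, scaling factors
`α i` and translations `h i`. This is a relation rather than a function of `g`, since the pieces
`φ i '' S` may overlap and then the prescribed values need not agree. -/
def IsReadBajraktarevicImage {ι X Y 𝕜 E : Type*} [Add E] [SMul 𝕜 E] (φ : ι → X → Y) (S : Set X)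
    (α : ι → X → 𝕜) (h : ι → X → E) (g : X → E) (G : Y → E) : Prop :=
  ∀ i, ∀ x ∈ S, G (φ i x) = α i x • g x + h i x

namespace IsReadBajraktarevicImage

theorem of_prod {ι κ X X' Y Y' 𝕜 E : Type*} [Add E] [SMul 𝕜 E] {φ : ι → X → X'} {ψ : κ → Y → Y'}
    {S : Set X} {T : Set Y} {α : ι → κ → X × Y → 𝕜} {h : ι → κ → X × Y → E} {g : X × Y → E}
    {G : X' × Y' → E}
    (hG : ∀ i j, ∀ t ∈ S, ∀ s ∈ T, G (φ i t, ψ j s) = α i j (t, s) • g (t, s) + h i j (t, s)) :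
    IsReadBajraktarevicImage (fun k : ι × κ => Prod.map (φ k.1) (ψ k.2)) (S ×ˢ T)
      (fun k => α k.1 k.2) (fun k => h k.1 k.2) g G :=
  fun k x hx => hG k.1 k.2 x.1 hx.1 x.2 hx.2

theorem norm_sub_le {ι X Y 𝕜 E : Type*} [SeminormedRing 𝕜] [SeminormedAddCommGroup E]
    [Module 𝕜 E] [IsBoundedSMul 𝕜 E] {φ : ι → X → Y} {S : Set X} {T : Set Y}
    {α : ι → X → 𝕜} {h : ι → X → E} {g g' : X → E} {G G' : Y → E} {c D : ℝ}
    (hG : IsReadBajraktarevicImage φ S α h g G) (hG' : IsReadBajraktarevicImage φ S α h g' G')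
    (hT : T ⊆ ⋃ i, φ i '' S) (hc : ∀ i, ∀ x ∈ S, ‖α i x‖ ≤ c) (hD : ∀ x ∈ S, ‖g x - g' x‖ ≤ D) :
    ∀ y ∈ T, ‖G y - G' y‖ ≤ c * D := by
  intro y hy
  obtain ⟨i, x, hx, rfl⟩ := Set.mem_iUnion.1 (hT hy)
  have hc₀ : 0 ≤ c := (norm_nonneg _).trans (hc i x hx)
  calc ‖G (φ i x) - G' (φ i x)‖ = ‖α i x • (g x - g' x)‖ := by
        rw [hG i x hx, hG' i x hx, add_sub_add_right_eq_sub, smul_sub]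
    _ ≤ ‖α i x‖ * ‖g x - g' x‖ := norm_smul_le _ _
    _ ≤ c * D := mul_le_mul (hc i x hx) (hD x hx) (norm_nonneg _) hc₀

theorem eqOn {ι X 𝕜 E : Type*} [SeminormedRing 𝕜] [NormedAddCommGroup E] [Module 𝕜 E]
    [IsBoundedSMul 𝕜 E] {φ : ι → X → X} {S : Set X} {α : ι → X → 𝕜} {h : ι → X → E}
    {f f' : X → E} {c M : ℝ} (hf : IsReadBajraktarevicImage φ S α h f f)
    (hf' : IsReadBajraktarevicImage φ S α h f' f') (hS : S ⊆ ⋃ i, φ i '' S)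
    (hc : ∀ i, ∀ x ∈ S, ‖α i x‖ ≤ c) (hc₁ : c < 1) (hM : ∀ x ∈ S, ‖f x - f' x‖ ≤ M) :
    Set.EqOn f f' S := by
  intro x hx
  have hc₀ : 0 ≤ c := by
    obtain ⟨i, y, hy, -⟩ := Set.mem_iUnion.1 (hS hx)
    exact (norm_nonneg _).trans (hc i y hy)
  have norm_sub_le_pow (n : ℕ) : ∀ y ∈ S, ‖f y - f' y‖ ≤ c ^ n * M := by
    induction n with
    | zero => simpa using hM
    | succ n ih => simpa only [pow_succ', mul_assoc] using hf.norm_sub_le hf' hS hc ih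
  have tendsto_zero : Filter.Tendsto (fun n : ℕ => c ^ n * M) Filter.atTop (nhds 0) := by
    simpa using (tendsto_pow_atTop_nhds_zero_of_lt_one hc₀ hc₁).mul_const M
  have norm_sub_le_zero : ‖f x - f' x‖ ≤ 0 :=
    ge_of_tendsto' tendsto_zero fun n => norm_sub_le_pow n x hx
  exact sub_eq_zero.1 (norm_le_zero_iff.1 norm_sub_le_zero)

end IsReadBajraktarevicImage

theorem stmt_6_general {ι κ X Y 𝕜 E : Type*} [SeminormedRing 𝕜] [NormedAddCommGroup E]
    [Module 𝕜 E] [IsBoundedSMul 𝕜 E] {φ : ι → X → X} {ψ : κ → Y → Y} {S : Set X} {T : Set Y}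
    (hS : S ⊆ ⋃ i, φ i '' S) (hT : T ⊆ ⋃ j, ψ j '' T)
    (α : ι → κ → X × Y → 𝕜) (h : ι → κ → X × Y → E) {c : ℝ}
    (hc : ∀ i j, ∀ x ∈ S ×ˢ T, ‖α i j x‖ ≤ c) :
    (∀ g g' G G' : X × Y → E,
      (∀ i j, ∀ t ∈ S, ∀ s ∈ T, G (φ i t, ψ j s) = α i j (t, s) • g (t, s) + h i j (t, s)) →
      (∀ i j, ∀ t ∈ S, ∀ s ∈ T, G' (φ i t, ψ j s) = α i j (t, s) • g' (t, s) + h i j (t, s)) →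
      ∀ D : ℝ, (∀ x ∈ S ×ˢ T, ‖g x - g' x‖ ≤ D) → ∀ x ∈ S ×ˢ T, ‖G x - G' x‖ ≤ c * D) ∧
    (c < 1 → ∀ f f' : X × Y → E,
      (∃ M : ℝ, ∀ x ∈ S ×ˢ T, ‖f x - f' x‖ ≤ M) →
      (∀ i j, ∀ t ∈ S, ∀ s ∈ T, f (φ i t, ψ j s) = α i j (t, s) • f (t, s) + h i j (t, s)) →
      (∀ i j, ∀ t ∈ S, ∀ s ∈ T, f' (φ i t, ψ j s) = α i j (t, s) • f' (t, s) + h i j (t, s)) →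
      Set.EqOn f f' (S ×ˢ T)) := by
  have hST := prod_subset_iUnion_image_prodMap hS hT
  have hc' (k : ι × κ) : ∀ x ∈ S ×ˢ T, ‖α k.1 k.2 x‖ ≤ c := hc k.1 k.2
  refine ⟨fun g g' G G' hG hG' D hD => ?_, fun hc₁ f f' ⟨M, hM⟩ hf hf' => ?_⟩
  · exact (IsReadBajraktarevicImage.of_prod hG).norm_sub_le (.of_prod hG') hST hc' hD
  · exact (IsReadBajraktarevicImage.of_prod hf).eqOn (.of_prod hf') hST hc' hc₁ hM

/-- The Read–Bajraktarević operator is a contraction with contraction factor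
`max_{ω,η} ‖α_{ωη}‖_∞`: if `G, G̃` are obtained from bounded functions `g, g̃` via the
self-referential relation, then `sup |G − G̃| ≤ (max ‖α_{ωη}‖_∞) · sup |g − g̃|`.
In particular, when `max ‖α_{ωη}‖_∞ < 1`, two continuous functions satisfying the
self-referential equation on `SG' × SG''` coincide there. -/
theorem stmt_6 (p q : Fin 3 → E2) (SG' SG'' : Set E2)
    (hSG' : IsSG p SG') (hSG'' : IsSG q SG'') (N : ℕ) (hN : 1 ≤ N)
    (α h : (Fin N → Fin 3) → (Fin N → Fin 3) → E2 × E2 → ℝ)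
    (hαcont : ∀ ω η, ContinuousOn (α ω η) (SG' ×ˢ SG''))
    (hhcont : ∀ ω η, ContinuousOn (h ω η) (SG' ×ˢ SG''))
    (c : ℝ) (hc : ∀ ω η : Fin N → Fin 3, ∀ x ∈ SG' ×ˢ SG'', |α ω η x| ≤ c) :
    (∀ g g' G G' : E2 × E2 → ℝ,
      (∃ M : ℝ, ∀ x ∈ SG' ×ˢ SG'', |g x| ≤ M) →
      (∃ M : ℝ, ∀ x ∈ SG' ×ˢ SG'', |g' x| ≤ M) →
      (∀ ω η : Fin N → Fin 3, ∀ t ∈ SG', ∀ s ∈ SG'',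
        G (wordMap p ω t, wordMap q η s) = α ω η (t, s) * g (t, s) + h ω η (t, s)) →
      (∀ ω η : Fin N → Fin 3, ∀ t ∈ SG', ∀ s ∈ SG'',
        G' (wordMap p ω t, wordMap q η s) = α ω η (t, s) * g' (t, s) + h ω η (t, s)) →
      ∀ D : ℝ, (∀ x ∈ SG' ×ˢ SG'', |g x - g' x| ≤ D) →
        ∀ x ∈ SG' ×ˢ SG'', |G x - G' x| ≤ c * D) ∧
    (c < 1 → ∀ f f' : E2 × E2 → ℝ,
      ContinuousOn f (SG' ×ˢ SG'') → ContinuousOn f' (SG' ×ˢ SG'') →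
      (∀ ω η : Fin N → Fin 3, ∀ t ∈ SG', ∀ s ∈ SG'',
        f (wordMap p ω t, wordMap q η s) = α ω η (t, s) * f (t, s) + h ω η (t, s)) →
      (∀ ω η : Fin N → Fin 3, ∀ t ∈ SG', ∀ s ∈ SG'',
        f' (wordMap p ω t, wordMap q η s) = α ω η (t, s) * f' (t, s) + h ω η (t, s)) →
      Set.EqOn f f' (SG' ×ˢ SG'')) := by
  have general := stmt_6_general (hSG'.subset_iUnion_image_wordMap N)
    (hSG''.subset_iUnion_image_wordMap N) α h hc
  have hcompact : IsCompact (SG' ×ˢ SG'') := hSG'.2.2.1.prod hSG''.2.2.1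
  exact ⟨fun g g' G G' _ _ => general.1 g g' G G', fun hc₁ f f' hf hf' =>
    general.2 hc₁ f f' (hcompact.exists_bound_of_continuousOn (hf.sub hf'))⟩
end
end

section
/- Fix N ≥ 1 and write a = 1/2^N; suppose ‖(t,s) − (t',s')‖_2 ≤ 1 for all (t,s),(t',s') ∈ SG' × SG''. Let f : SG' × SG'' → ℝ be the continuous function satisfying f(L_ω(t),K_η(s)) = α_{ωη}(t,s)·f(t,s) + h_{ωη}(t,s) for all ω,η ∈ I^N and (t,s) ∈ SG' × SG''. Suppose each h_{ωη} is Hölder continuous with exponent s_h ∈ (0,1] and constant K_h, and each α_{ωη} is Hölder continuous with exponent s_{α_{ωη}} ∈ (0,1] and constant K_{α_{ωη}}, with ‖α_{ωη}‖_∞ < 1. Set ‖α‖_∞ = max_{ω,η ∈ I^N} ‖α_{ωη}‖_∞, s_α = min_{ω,η} s_{α_{ωη}}, and s = min{s_h, s_α}. If ‖α‖_∞ < 1/2^N, then f is Hölder continuous with exponent s: there is a constant C such that |f(t,s) − f(t',s')| ≤ C·‖(t,s)−(t',s')‖_2^s for all (t,s),(t',s') ∈ SG' × SG''. -/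
noncomputable section

/-- The word alphabet `I^N`: words of length `N` over `I = {1,2,3}`. -/
abbrev Word (N : ℕ) := Fin N → Fin 3

/-- The Euclidean (`ℓ²`) distance `‖(t,s) − (t',s')‖₂` on the product `ℝ² × ℝ²`. -/
def dist2 (x y : E2 × E2) : ℝ := Real.sqrt (dist x.1 y.1 ^ 2 + dist x.2 y.2 ^ 2)

/-- `g` is Hölder continuous on `S` with constant `K` and exponent `β` (with respect
to the Euclidean distance on `ℝ² × ℝ²`). -/
def HolderOn2 (S : Set (E2 × E2)) (g : E2 × E2 → ℝ) (K β : ℝ) : Prop :=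
  ∀ x ∈ S, ∀ y ∈ S, |g x - g y| ≤ K * dist2 x y ^ β

/-- The sup-norm `‖g‖_∞ = sup_{x ∈ S} |g x|` of a function on `S`. -/
noncomputable def supAbs (S : Set (E2 × E2)) (g : E2 × E2 → ℝ) : ℝ :=
  sSup ((fun x => |g x|) '' S)

/-!
Call `L_ω(SG') × K_η(SG'')`, for words `ω` and `η` of the same length `n`, a cell of level `n`.
Applying the functional equation inside a cell multiplies the oscillation of `f` by at most
`a = ‖α‖_∞` and adds a term of order `(diam)^s`. As each application shrinks distances by `2^{-N}`
and `a < 2^{-N} ≤ 2^{-Ns}`, the oscillation of `f` on a cell of level `nN` is `O(2^{-nNs})`.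

It remains to compare points that do not share a cell. In barycentric coordinates, two points of
different cells of level one at distance `d` are both within `O(d)` of the common corner of these
cells, so by self-similarity any two points of a gasket at distance at most `c 2^{-n}` lie in cells
of level `n` that have a point in common. This property passes to products of gaskets, where it
makes `f` vary by `O(2^{-nNs})` between points at distance at most `c 2^{-nN}`.
-/

open Set Bornology
open scoped NNReal

section SelfSimilar

variable {ι κ X Y : Type*}

/-- The composition `φ_{ω₁} ∘ ⋯ ∘ φ_{ωₙ}` of the maps of a family `φ` along a word `ω`.
For `φ = Lmap p` this is `wordMap p ω`. -/
def wordComp (φ : ι → X → X) {n : ℕ} (ω : Fin n → ι) : X → X :=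
  (List.ofFn fun k => φ (ω k)).foldr (· ∘ ·) id

theorem wordComp_cons (φ : ι → X → X) {n : ℕ} (i : ι) (ω : Fin n → ι) (x : X) :
    wordComp φ (Fin.cons i ω : Fin (n + 1) → ι) x = φ i (wordComp φ ω x) := by
  simp only [wordComp, List.ofFn_succ, Fin.cons_zero, Fin.cons_succ, List.foldr_cons,
    Function.comp_apply]

theorem wordComp_induction (φ : ι → X → X) {motive : ℕ → (X → X) → Prop} (zero : motive 0 id)
    (succ : ∀ n i g, motive n g → motive (n + 1) (φ i ∘ g)) {n : ℕ} (ω : Fin n → ι) :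
    motive n (wordComp φ ω) := by
  induction n with
  | zero => simpa only [wordComp, List.ofFn_zero, List.foldr_nil] using zero
  | succ n ih =>
    rw [← Fin.cons_self_tail ω, funext (wordComp_cons φ (ω 0) (Fin.tail ω))]
    exact succ n _ _ (ih _)

theorem mapsTo_wordComp {φ : ι → X → X} {A : Set X} (hφ : ∀ i, MapsTo (φ i) A A) {n : ℕ}
    (ω : Fin n → ι) : MapsTo (wordComp φ ω) A A :=
  wordComp_induction φ (motive := fun _ g => MapsTo g A A) (mapsTo_id A)
    (fun _ i _ hg => (hφ i).comp hg) ω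

theorem lipschitzWith_wordComp [PseudoEMetricSpace X] {φ : ι → X → X} {ρ : ℝ≥0}
    (hφ : ∀ i, LipschitzWith ρ (φ i)) {n : ℕ} (ω : Fin n → ι) :
    LipschitzWith (ρ ^ n) (wordComp φ ω) :=
  wordComp_induction φ (motive := fun n g => LipschitzWith (ρ ^ n) g)
    (by simpa only [pow_zero] using LipschitzWith.id)
    (fun n i _ hg => by simpa only [pow_succ'] using (hφ i).comp hg) ω

/-- `SameCell φ A n x y` says that `x` and `y` lie in a common cell
`φ_{i₁} ∘ ⋯ ∘ φ_{iₙ} (A)` of level `n`. This is not transitive, as cells may overlap. -/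
inductive SameCell (φ : ι → X → X) (A : Set X) : ℕ → X → X → Prop
  | zero {x y : X} (hx : x ∈ A) (hy : y ∈ A) : SameCell φ A 0 x y
  | succ {n : ℕ} {x y : X} (i : ι) (h : SameCell φ A n x y) : SameCell φ A (n + 1) (φ i x) (φ i y)

namespace SameCell

variable {φ : ι → X → X} {ψ : κ → Y → Y} {A : Set X} {B : Set Y} {n : ℕ} {x y : X}

theorem symm (h : SameCell φ A n x y) : SameCell φ A n y x := by
  induction h with
  | zero hx hy => exact zero hy hx
  | succ i _ ih => exact succ i ih

theorem mem (hφ : ∀ i, MapsTo (φ i) A A) (h : SameCell φ A n x y) : x ∈ A ∧ y ∈ A := by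
  induction h with
  | zero hx hy => exact ⟨hx, hy⟩
  | succ i _ ih => exact ⟨hφ i ih.1, hφ i ih.2⟩

theorem prodMap (h : SameCell φ A n x y) {s t : Y} (h' : SameCell ψ B n s t) :
    SameCell (fun i : ι × κ => Prod.map (φ i.1) (ψ i.2)) (A ×ˢ B) n (x, s) (y, t) := by
  induction h generalizing s t with
  | zero hx hy =>
    cases h' with
    | zero hs ht => exact zero ⟨hx, hs⟩ ⟨hy, ht⟩
  | succ i _ ih =>
    cases h' with
    | succ j h' => exact succ (i, j) (ih h')

theorem exists_wordComp {N m : ℕ} (h : SameCell φ A (m + N) x y) :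
    ∃ (ω : Fin N → ι) (x' y' : X),
      SameCell φ A m x' y' ∧ wordComp φ ω x' = x ∧ wordComp φ ω y' = y := by
  induction N generalizing x y with
  | zero => exact ⟨Fin.elim0, x, y, h, rfl, rfl⟩
  | succ N ih =>
    cases h with
    | succ i h =>
      obtain ⟨ω, x', y', h', rfl, rfl⟩ := ih h
      exact ⟨Fin.cons i ω, x', y', h', wordComp_cons φ i ω x', wordComp_cons φ i ω y'⟩

theorem wordComp {N : ℕ} (h : SameCell φ A (N * n) x y) :
    SameCell (fun ω : Fin N → ι => wordComp φ ω) A n x y := by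
  induction n generalizing x y with
  | zero =>
    cases h with
    | zero hx hy => exact zero hx hy
  | succ n ih =>
    obtain ⟨ω, x', y', h', rfl, rfl⟩ := exists_wordComp h
    exact succ ω (ih h')

theorem dist_le_pow_mul_diam {X : Type*} [PseudoMetricSpace X] {φ : ι → X → X} {A : Set X}
    {x y : X} {ρ : ℝ≥0} (hφ : ∀ i, LipschitzWith ρ (φ i)) (hA : IsBounded A)
    (h : SameCell φ A n x y) : dist x y ≤ ρ ^ n * Metric.diam A := by
  induction h with
  | zero hx hy => simpa only [pow_zero, one_mul] using Metric.dist_le_diam_of_mem hA hx hy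
  | @succ n x y i _ ih =>
    calc dist (φ i x) (φ i y) ≤ ρ * dist x y := (hφ i).dist_le_mul x y
      _ ≤ ρ * (ρ ^ n * Metric.diam A) := by gcongr
      _ = ρ ^ (n + 1) * Metric.diam A := by ring

end SameCell

variable [PseudoMetricSpace X] [PseudoMetricSpace Y]

/-- Points of `A` at distance at most a fixed multiple of `ρ ^ n` lie in cells of level `n` that
share a point `z`. -/
def CellsAdjacent (φ : ι → X → X) (A : Set X) (ρ : ℝ≥0) : Prop :=
  ∃ c > 0, ∀ n, ∀ x ∈ A, ∀ y ∈ A, dist x y ≤ c * (ρ : ℝ) ^ n →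
    ∃ z, SameCell φ A n x z ∧ SameCell φ A n z y

namespace CellsAdjacent

variable {φ : ι → X → X} {ψ : κ → Y → Y} {A : Set X} {B : Set Y} {ρ : ℝ≥0}

theorem wordComp (h : CellsAdjacent φ A ρ) (N : ℕ) :
    CellsAdjacent (fun ω : Fin N → ι => wordComp φ ω) A (ρ ^ N) := by
  obtain ⟨c, hc, h⟩ := h
  refine ⟨c, hc, fun n x hx y hy hxy => ?_⟩
  rw [NNReal.coe_pow, ← pow_mul] at hxy
  obtain ⟨z, hxz, hzy⟩ := h (N * n) x hx y hy hxy
  exact ⟨z, hxz.wordComp, hzy.wordComp⟩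

theorem prodMap (h : CellsAdjacent φ A ρ) (h' : CellsAdjacent ψ B ρ) :
    CellsAdjacent (fun i : ι × κ => Prod.map (φ i.1) (ψ i.2)) (A ×ˢ B) ρ := by
  obtain ⟨c, hc, h⟩ := h
  obtain ⟨c', hc', h'⟩ := h'
  refine ⟨min c c', lt_min hc hc', ?_⟩
  rintro n ⟨x, s⟩ ⟨hx, hs⟩ ⟨y, t⟩ ⟨hy, ht⟩ hdist
  rw [Prod.dist_eq, max_le_iff] at hdist
  obtain ⟨z, hxz, hzy⟩ := h n x hx y hy (hdist.1.trans (by gcongr; exact min_le_left c c'))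
  obtain ⟨w, hsw, hwt⟩ := h' n s hs t ht (hdist.2.trans (by gcongr; exact min_le_right c c'))
  exact ⟨(z, w), hxz.prodMap hsw, hzy.prodMap hwt⟩

end CellsAdjacent

end SelfSimilar

section Holder

theorem holderOnWith_of_dist_le {X Y : Type*} [PseudoMetricSpace X] [PseudoMetricSpace Y]
    {f : X → Y} {A : Set X} {C σ : ℝ≥0}
    (h : ∀ x ∈ A, ∀ y ∈ A, dist (f x) (f y) ≤ C * dist x y ^ (σ : ℝ)) : HolderOnWith C σ f A := by
  intro x hx y hy
  rw [edist_nndist, edist_nndist, ← ENNReal.coe_rpow_of_nonneg _ σ.coe_nonneg, ← ENNReal.coe_mul,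
    ENNReal.coe_le_coe]
  exact_mod_cast h x hx y hy

/-- It is enough to test Hölder continuity at a geometric sequence of scales. -/
theorem exists_holderOnWith_of_dist_le_pow {X Y : Type*} [MetricSpace X] [PseudoMetricSpace Y]
    {f : X → Y} {A : Set X} (hf : IsBounded (f '' A)) {ρ σ : ℝ≥0} (hρ₀ : 0 < ρ) (hρ₁ : ρ < 1)
    {c : ℝ} (hc : 0 < c) {K : ℝ≥0}
    (hscale : ∀ n, ∀ x ∈ A, ∀ y ∈ A, dist x y ≤ c * (ρ : ℝ) ^ n →
      dist (f x) (f y) ≤ K * ((ρ : ℝ) ^ (σ : ℝ)) ^ n) :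
    ∃ C, HolderOnWith C σ f A := by
  lift c to ℝ≥0 using hc.le
  have hρ₀' : (0 : ℝ) < ρ := hρ₀
  let D : ℝ≥0 := ⟨Metric.diam (f '' A), Metric.diam_nonneg⟩
  refine ⟨max (D / c ^ (σ : ℝ)) (K / (ρ * c) ^ (σ : ℝ)), holderOnWith_of_dist_le ?_⟩
  intro x hx y hy
  obtain rfl | hne := eq_or_ne x y
  · rw [dist_self (f x)]
    positivity
  obtain hfar | hnear := le_total (c : ℝ) (dist x y)
  · calc dist (f x) (f y) ≤ D :=
          Metric.dist_le_diam_of_mem hf (mem_image_of_mem f hx) (mem_image_of_mem f hy)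
      _ = (D / c ^ (σ : ℝ) : ℝ≥0) * (c : ℝ) ^ (σ : ℝ) := by
          push_cast
          exact (div_mul_cancel₀ _ (by positivity)).symm
      _ ≤ _ := by
          gcongr
          exact le_max_left _ _
  · obtain ⟨n, hlow, hup⟩ := exists_nat_pow_near_of_lt_one (div_pos (dist_pos.2 hne) hc)
      ((div_le_one hc).2 hnear) hρ₀' hρ₁
    rw [lt_div_iff₀ hc] at hlow
    rw [div_le_iff₀' hc] at hup
    calc dist (f x) (f y) ≤ K * ((ρ : ℝ) ^ (σ : ℝ)) ^ n := hscale n x hx y hy hup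
      _ = (K / (ρ * c) ^ (σ : ℝ) : ℝ≥0) * ((ρ : ℝ) ^ (n + 1) * c) ^ (σ : ℝ) := by
          have hsplit : (ρ : ℝ) ^ (n + 1) * c = (ρ : ℝ) ^ n * (ρ * c) := by ring
          rw [hsplit, Real.mul_rpow (by positivity) (by positivity), ← Real.rpow_pow_comm hρ₀'.le]
          push_cast
          field_simp
      _ ≤ _ := by
          gcongr
          exact le_max_right _ _

theorem isBounded_image_of_holderOnWith {X Y : Type*} [PseudoMetricSpace X] [PseudoMetricSpace Y]
    {f : X → Y} {A : Set X} {C σ : ℝ≥0} (hf : HolderOnWith C σ f A) (hA : IsBounded A) :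
    IsBounded (f '' A) :=
  Metric.isBounded_iff_ediam_ne_top.2 <| ne_top_of_le_ne_top
    (ENNReal.mul_ne_top ENNReal.coe_ne_top <|
      ENNReal.rpow_ne_top_of_nonneg σ.coe_nonneg hA.ediam_ne_top)
    hf.ediam_image_le

variable {ι X Y : Type*}

/-- Passing to the next level multiplies the bound `K * r ^ n`, where `r = ρ ^ σ`, by `a` and adds
`B * (ρ ^ n * diam A) ^ σ`, so any `K` with `B * diam A ^ σ ≤ K * (r - a)` is preserved. -/
theorem exists_dist_le_of_sameCell [PseudoMetricSpace X] [PseudoMetricSpace Y] {φ : ι → X → X}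
    {A : Set X} {f : X → Y} {ρ σ a B : ℝ≥0} (hmaps : ∀ i, MapsTo (φ i) A A)
    (hlip : ∀ i, LipschitzWith ρ (φ i)) (hA : IsBounded A) (hf : IsBounded (f '' A))
    (ha : a < ρ ^ (σ : ℝ))
    (hstep : ∀ i, ∀ x ∈ A, ∀ y ∈ A,
      dist (f (φ i x)) (f (φ i y)) ≤ a * dist (f x) (f y) + B * dist x y ^ (σ : ℝ)) :
    ∃ K : ℝ≥0, ∀ n x y, SameCell φ A n x y →
      dist (f x) (f y) ≤ K * ((ρ : ℝ) ^ (σ : ℝ)) ^ n := by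
  set r : ℝ := (ρ : ℝ) ^ (σ : ℝ)
  have har : (a : ℝ) < r := mod_cast ha
  set b : ℝ := B * Metric.diam A ^ (σ : ℝ)
  set K : ℝ := max (Metric.diam (f '' A)) (b / (r - a))
  have hK : 0 ≤ K := Metric.diam_nonneg.trans (le_max_left _ _)
  have hbK : b ≤ K * (r - a) := (div_le_iff₀ (sub_pos.2 har)).1 (le_max_right _ _)
  refine ⟨⟨K, hK⟩, fun n x y h => ?_⟩
  change dist (f x) (f y) ≤ K * r ^ n
  induction h with
  | zero hx hy =>
    rw [pow_zero, mul_one]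
    exact (Metric.dist_le_diam_of_mem hf (mem_image_of_mem f hx)
      (mem_image_of_mem f hy)).trans (le_max_left _ _)
  | @succ n x y i h ih =>
    have hdist : dist x y ^ (σ : ℝ) ≤ r ^ n * Metric.diam A ^ (σ : ℝ) := by
      rw [Real.rpow_pow_comm ρ.coe_nonneg, ← Real.mul_rpow (by positivity) Metric.diam_nonneg]
      gcongr
      exact h.dist_le_pow_mul_diam hlip hA
    calc dist (f (φ i x)) (f (φ i y))
        ≤ a * dist (f x) (f y) + B * dist x y ^ (σ : ℝ) :=
          hstep i x (h.mem hmaps).1 y (h.mem hmaps).2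
      _ ≤ a * (K * r ^ n) + B * (r ^ n * Metric.diam A ^ (σ : ℝ)) := by gcongr
      _ = (a * K + b) * r ^ n := by ring
      _ ≤ (a * K + K * (r - a)) * r ^ n := by gcongr
      _ = K * r ^ (n + 1) := by ring

theorem exists_holderOnWith_of_cellsAdjacent [MetricSpace X] [PseudoMetricSpace Y]
    {φ : ι → X → X} {A : Set X} {f : X → Y} {ρ σ a B : ℝ≥0} (hρ₀ : 0 < ρ) (hρ₁ : ρ < 1)
    (hmaps : ∀ i, MapsTo (φ i) A A) (hlip : ∀ i, LipschitzWith ρ (φ i))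
    (hadj : CellsAdjacent φ A ρ) (hA : IsBounded A) (hf : IsBounded (f '' A))
    (ha : a < ρ ^ (σ : ℝ))
    (hstep : ∀ i, ∀ x ∈ A, ∀ y ∈ A,
      dist (f (φ i x)) (f (φ i y)) ≤ a * dist (f x) (f y) + B * dist x y ^ (σ : ℝ)) :
    ∃ C, HolderOnWith C σ f A := by
  obtain ⟨c, hc, hadj⟩ := hadj
  obtain ⟨K, hK⟩ := exists_dist_le_of_sameCell hmaps hlip hA hf ha hstep
  refine exists_holderOnWith_of_dist_le_pow (K := K + K) hf hρ₀ hρ₁ hc fun n x hx y hy hxy => ?_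
  obtain ⟨z, hxz, hzy⟩ := hadj n x hx y hy hxy
  calc dist (f x) (f y) ≤ dist (f x) (f z) + dist (f z) (f y) := dist_triangle _ _ _
    _ ≤ _ := add_le_add (hK n x z hxz) (hK n z y hzy)
    _ = _ := by push_cast; ring

theorem dist_smul_add_smul_add_le {E : Type*} [SeminormedAddCommGroup E] [NormedSpace ℝ E]
    (a b : ℝ) (u v h k : E) :
    dist (a • u + h) (b • v + k) ≤ |a| * dist u v + dist a b * ‖v‖ + dist h k := by
  have hsplit : a • u + h - (b • v + k) = a • (u - v) + (a - b) • v + (h - k) := by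
    module
  simp only [dist_eq_norm, hsplit, ← Real.norm_eq_abs, ← norm_smul]
  exact norm_add₃_le

theorem exists_holderOnWith_of_selfAffine [Finite ι] [MetricSpace X] {E : Type*}
    [SeminormedAddCommGroup E] [NormedSpace ℝ E] {φ : ι → X → X} {A : Set X} {f : X → E}
    {α : ι → X → ℝ} {h : ι → X → E} {ρ σ : ℝ≥0} {a : ℝ} (hρ₀ : 0 < ρ) (hρ₁ : ρ < 1)
    (hmaps : ∀ i, MapsTo (φ i) A A) (hlip : ∀ i, LipschitzWith ρ (φ i))
    (hadj : CellsAdjacent φ A ρ) (hA : IsBounded A) (hf : IsBounded (f '' A))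
    (hself : ∀ i, ∀ x ∈ A, f (φ i x) = α i x • f x + h i x)
    (hh : ∀ i, ∃ K, HolderOnWith K σ (h i) A) (hα : ∀ i, ∃ K, HolderOnWith K σ (α i) A)
    (hαa : ∀ i, ∀ x ∈ A, |α i x| ≤ a) (ha : a < (ρ : ℝ) ^ (σ : ℝ)) :
    ∃ C, HolderOnWith C σ f A := by
  choose Kh hh using hh
  choose Kα hα using hα
  obtain ⟨Kh', hKh'⟩ := Finite.exists_le Kh
  obtain ⟨Kα', hKα'⟩ := Finite.exists_le Kα
  obtain ⟨M, hM₀, hM⟩ := hf.exists_pos_norm_le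
  lift M to ℝ≥0 using hM₀.le
  have ha' : a.toNNReal < ρ ^ (σ : ℝ) := by
    rw [← NNReal.coe_lt_coe, Real.coe_toNNReal', NNReal.coe_rpow]
    exact max_lt ha (by positivity)
  refine exists_holderOnWith_of_cellsAdjacent (a := a.toNNReal) (B := Kα' * M + Kh') hρ₀ hρ₁ hmaps
    hlip hadj hA hf ha' fun i x hx y hy => ?_
  rw [hself i x hx, hself i y hy]
  calc dist (α i x • f x + h i x) (α i y • f y + h i y)
      ≤ |α i x| * dist (f x) (f y) + dist (α i x) (α i y) * ‖f y‖ + dist (h i x) (h i y) :=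
        dist_smul_add_smul_add_le ..
    _ ≤ a.toNNReal * dist (f x) (f y) + Kα' * dist x y ^ (σ : ℝ) * M
          + Kh' * dist x y ^ (σ : ℝ) := by
        gcongr
        · exact (hαa i x hx).trans (Real.le_coe_toNNReal a)
        · exact ((hα i).dist_le hx hy).trans (by gcongr; exact hKα' i)
        · exact hM _ (mem_image_of_mem f hy)
        · exact ((hh i).dist_le hx hy).trans (by gcongr; exact hKh' i)
    _ = _ := by push_cast; ring

end Holder

section Gasket

theorem coord_midpoint {ι k V P : Type*} [Field k] [Invertible (2 : k)] [AddCommGroup V]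
    [Module k V] [AddTorsor V P] (b : AffineBasis ι k P) (j : ι) (x y : P) :
    b.coord j (midpoint k x y) = (b.coord j x + b.coord j y) / 2 := by
  rw [AffineMap.map_midpoint, midpoint_eq_smul_add, smul_eq_mul, invOf_eq_inv, div_eq_inv_mul]

variable {ι V P : Type*} [NormedAddCommGroup V] [NormedSpace ℝ V] [MetricSpace P]
  [NormedAddTorsor V P]

theorem dist_midpoint_midpoint_left (p x y : P) :
    dist (midpoint ℝ p x) (midpoint ℝ p y) = dist x y / 2 := by
  rw [dist_eq_norm_vsub V, midpoint_vsub_midpoint, vsub_self, midpoint_eq_smul_add, zero_add,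
    norm_smul, ← dist_eq_norm_vsub V x y, invOf_eq_inv, norm_inv, Real.norm_ofNat, div_eq_inv_mul]

theorem lipschitzWith_midpoint_left (p : P) : LipschitzWith 2⁻¹ (midpoint ℝ p) :=
  LipschitzWith.of_dist_le_mul fun x y => by
    simp [dist_midpoint_midpoint_left, div_eq_inv_mul]

/-- The Sierpiński gasket with vertices `p i`: a nonempty compact set that is the union of its
images under the homotheties of ratio `1 / 2` centred at the vertices. -/
structure IsSimplexGasket (p : ι → P) (S : Set P) : Prop where
  nonempty : S.Nonempty
  isCompact : IsCompact S
  eq_iUnion : S = ⋃ i, midpoint ℝ (p i) '' S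

namespace IsSimplexGasket

section Vertices

variable {p : ι → P} {S : Set P}

theorem mapsTo_midpoint (hS : IsSimplexGasket p S) (i : ι) : MapsTo (midpoint ℝ (p i)) S S := by
  intro x hx
  rw [hS.eq_iUnion]
  exact mem_iUnion_of_mem i (mem_image_of_mem _ hx)

theorem exists_midpoint_eq (hS : IsSimplexGasket p S) {x : P} (hx : x ∈ S) :
    ∃ i, ∃ y ∈ S, midpoint ℝ (p i) y = x := by
  rw [hS.eq_iUnion] at hx
  exact mem_iUnion.1 hx

theorem vertex_mem (hS : IsSimplexGasket p S) (i : ι) : p i ∈ S := by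
  obtain ⟨x, hx, hmin⟩ :=
    hS.isCompact.exists_isMinOn hS.nonempty (continuous_id.dist continuous_const).continuousOn
  have hle : dist x (p i) ≤ dist (midpoint ℝ (p i) x) (p i) := hmin (hS.mapsTo_midpoint i hx)
  rw [dist_midpoint_left, dist_comm (p i), Real.norm_ofNat] at hle
  have hzero : dist x (p i) = 0 := by linarith [dist_nonneg (x := x) (y := p i)]
  rwa [dist_eq_zero.1 hzero] at hx

/-- A maximum point of `g` is the midpoint of a vertex and some `y ∈ S`, so the maximum is at most
half of itself. -/
theorem nonpos_of_midpoint_le_half (hS : IsSimplexGasket p S) {g : P → ℝ} (hg : ContinuousOn g S)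
    (hle : ∀ i, ∀ x ∈ S, g (midpoint ℝ (p i) x) ≤ g x / 2) {x : P} (hx : x ∈ S) : g x ≤ 0 := by
  obtain ⟨m, hm, hmax⟩ := hS.isCompact.exists_isMaxOn hS.nonempty hg
  obtain ⟨i, y, hy, rfl⟩ := hS.exists_midpoint_eq hm
  have hxm : g x ≤ g (midpoint ℝ (p i) y) := hmax hx
  have hym : g y ≤ g (midpoint ℝ (p i) y) := hmax hy
  linarith [hle i y hy]

end Vertices

section AffineBasis

variable [Finite ι] {b : AffineBasis ι ℝ P} {S : Set P} {i j : ι} {x y : P}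

theorem coord_nonneg (hS : IsSimplexGasket b S) (hx : x ∈ S) : 0 ≤ b.coord j x := by
  have := b.finiteDimensional
  refine neg_nonpos.1 (hS.nonpos_of_midpoint_le_half (g := fun x => -b.coord j x)
    (continuous_barycentric_coord b j).neg.continuousOn (fun i y _ => ?_) hx)
  classical
  rw [coord_midpoint, b.coord_apply]
  split_ifs <;> linarith

theorem coord_le_one (hS : IsSimplexGasket b S) (hx : x ∈ S) : b.coord j x ≤ 1 := by
  have := b.finiteDimensional
  refine sub_nonpos.1 (hS.nonpos_of_midpoint_le_half (g := fun x => b.coord j x - 1)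
    ((continuous_barycentric_coord b j).sub continuous_const).continuousOn (fun i y _ => ?_) hx)
  classical
  rw [coord_midpoint, b.coord_apply]
  split_ifs <;> linarith

theorem sameCell_vertex_of_one_sub_coord_lt (hS : IsSimplexGasket b S) {n : ℕ} (hx : x ∈ S)
    (hj : 1 - b.coord j x < (1 / 2) ^ n) :
    SameCell (fun i => midpoint ℝ (b i)) S n x (b j) := by
  induction n generalizing x with
  | zero => exact .zero hx (hS.vertex_mem j)
  | succ n ih =>
    obtain ⟨i, y, hy, rfl⟩ := hS.exists_midpoint_eq hx
    rw [coord_midpoint, pow_succ] at hj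
    obtain rfl | hij := eq_or_ne i j
    · rw [b.coord_apply_eq] at hj
      simpa only [midpoint_self] using (ih hy (by linarith)).succ i
    · rw [b.coord_apply_ne hij.symm] at hj
      have hpow : (1 / 2 : ℝ) ^ n ≤ 1 := pow_le_one₀ (by norm_num) (by norm_num)
      linarith [hS.coord_le_one (j := j) hy]

theorem one_sub_coord_le_mul_dist (hS : IsSimplexGasket b S) {L : ℝ≥0}
    (hL : LipschitzWith L (b.coord j)) (hij : i ≠ j) (hy : y ∈ S) :
    1 - b.coord j x ≤ 2 * L * dist (midpoint ℝ (b i) x) (midpoint ℝ (b j) y) := by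
  have hdist := hL.dist_le_mul (midpoint ℝ (b i) x) (midpoint ℝ (b j) y)
  rw [coord_midpoint, coord_midpoint, b.coord_apply_eq, b.coord_apply_ne hij.symm, dist_comm,
    Real.dist_eq] at hdist
  linarith [(le_abs_self _).trans hdist, hS.coord_nonneg (j := j) hy]

/-- The cells of level one with vertices `b i` and `b j` touch at `midpoint ℝ (b i) (b j)`. A point
of the former that is close to the latter shares a small cell with this point. -/
theorem sameCell_midpoint_vertices (hS : IsSimplexGasket b S) {L : ℝ≥0} {n : ℕ}
    (hL : LipschitzWith L (b.coord j)) (hij : i ≠ j) (hx : x ∈ S) (hy : y ∈ S)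
    (hxy : 2 * L * dist (midpoint ℝ (b i) x) (midpoint ℝ (b j) y) < (1 / 2) ^ n) :
    SameCell (fun i => midpoint ℝ (b i)) S (n + 1) (midpoint ℝ (b i) x)
      (midpoint ℝ (b i) (b j)) :=
  (hS.sameCell_vertex_of_one_sub_coord_lt hx
    ((hS.one_sub_coord_le_mul_dist hL hij hy).trans_lt hxy)).succ i

theorem cellsAdjacent (hS : IsSimplexGasket b S) :
    CellsAdjacent (fun i => midpoint ℝ (b i)) S 2⁻¹ := by
  have := b.finiteDimensional
  choose L' hL' using fun j => (b.coord j).lipschitzWith_of_finiteDimensional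
  obtain ⟨L, hLL'⟩ := Finite.exists_le L'
  have hL (j) : LipschitzWith L (b.coord j) := (hL' j).weaken (hLL' j)
  refine ⟨(L + 1 : ℝ)⁻¹, by positivity, fun n => ?_⟩
  induction n with
  | zero => exact fun x hx y hy _ => ⟨x, .zero hx hx, .zero hx hy⟩
  | succ n ih =>
    intro x' hx' y' hy' hdist
    obtain ⟨i, x, hx, rfl⟩ := hS.exists_midpoint_eq hx'
    obtain ⟨j, y, hy, rfl⟩ := hS.exists_midpoint_eq hy'
    push_cast at hdist ih
    obtain rfl | hij := eq_or_ne i j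
    · rw [dist_midpoint_midpoint_left, pow_succ] at hdist
      obtain ⟨z, hxz, hzy⟩ := ih x hx y hy (by linarith)
      exact ⟨_, hxz.succ i, hzy.succ i⟩
    · have hnear : 2 * L * dist (midpoint ℝ (b i) x) (midpoint ℝ (b j) y) < (1 / 2) ^ n := by
        calc 2 * L * dist (midpoint ℝ (b i) x) (midpoint ℝ (b j) y)
            ≤ 2 * L * ((L + 1 : ℝ)⁻¹ * 2⁻¹ ^ (n + 1)) := by gcongr
          _ = L / (L + 1) * (1 / 2) ^ n := by rw [one_div]; ring
          _ < (1 / 2) ^ n := mul_lt_of_lt_one_left (by positivity)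
              ((div_lt_one (by positivity)).2 (lt_add_one _))
      have hxz := hS.sameCell_midpoint_vertices (hL j) hij hx hy hnear
      have hyz := hS.sameCell_midpoint_vertices (hL i) hij.symm hy hx (by rwa [dist_comm])
      rw [midpoint_comm (R := ℝ) (b j) (b i)] at hyz
      exact ⟨_, hxz, hyz.symm⟩

end AffineBasis

end IsSimplexGasket

end Gasket

theorem stmt_10_general {ι κ V W P Q G : Type*} [Finite ι] [Finite κ]
    [NormedAddCommGroup V] [NormedSpace ℝ V] [MetricSpace P] [NormedAddTorsor V P]
    [NormedAddCommGroup W] [NormedSpace ℝ W] [MetricSpace Q] [NormedAddTorsor W Q]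
    [SeminormedAddCommGroup G] [NormedSpace ℝ G]
    {b : AffineBasis ι ℝ P} {c : AffineBasis κ ℝ Q} {S : Set P} {T : Set Q}
    (hS : IsSimplexGasket b S) (hT : IsSimplexGasket c T) {N : ℕ} (hN : N ≠ 0)
    {α : (Fin N → ι) → (Fin N → κ) → P × Q → ℝ} {h : (Fin N → ι) → (Fin N → κ) → P × Q → G}
    {f : P × Q → G} (hfb : IsBounded (f '' S ×ˢ T))
    (hf : ∀ ω η, ∀ t ∈ S, ∀ s ∈ T,
      f (wordComp (fun i => midpoint ℝ (b i)) ω t, wordComp (fun j => midpoint ℝ (c j)) η s) =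
        α ω η (t, s) • f (t, s) + h ω η (t, s))
    {σ : ℝ≥0} (hh : ∀ ω η, ∃ K, HolderOnWith K σ (h ω η) (S ×ˢ T))
    (hα : ∀ ω η, ∃ K, HolderOnWith K σ (α ω η) (S ×ˢ T)) {a : ℝ}
    (hαa : ∀ ω η, ∀ x ∈ S ×ˢ T, |α ω η x| ≤ a) (ha : a < (1 / 2 ^ N : ℝ) ^ (σ : ℝ)) :
    ∃ C, HolderOnWith C σ f (S ×ˢ T) := by
  have hlip₁ (ω : Fin N → ι) : LipschitzWith (2⁻¹ ^ N) (wordComp (fun i => midpoint ℝ (b i)) ω) :=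
    lipschitzWith_wordComp (fun i => lipschitzWith_midpoint_left (b i)) ω
  have hlip₂ (η : Fin N → κ) : LipschitzWith (2⁻¹ ^ N) (wordComp (fun j => midpoint ℝ (c j)) η) :=
    lipschitzWith_wordComp (fun j => lipschitzWith_midpoint_left (c j)) η
  refine exists_holderOnWith_of_selfAffine
    (φ := fun ωη : (Fin N → ι) × (Fin N → κ) => Prod.map (wordComp (fun i => midpoint ℝ (b i)) ωη.1)
      (wordComp (fun j => midpoint ℝ (c j)) ωη.2))
    (α := fun ωη => α ωη.1 ωη.2) (h := fun ωη => h ωη.1 ωη.2) (ρ := 2⁻¹ ^ N) (a := a)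
    (by positivity) (pow_lt_one₀ zero_le (by norm_num) hN)
    (fun ωη => (mapsTo_wordComp hS.mapsTo_midpoint ωη.1).prodMap
      (mapsTo_wordComp hT.mapsTo_midpoint ωη.2)) (fun ωη => ?_)
    ((hS.cellsAdjacent.wordComp N).prodMap (hT.cellsAdjacent.wordComp N))
    (hS.isCompact.prod hT.isCompact).isBounded hfb
    (fun ωη x hx => hf ωη.1 ωη.2 x.1 hx.1 x.2 hx.2) (fun ωη => hh ωη.1 ωη.2)
    (fun ωη => hα ωη.1 ωη.2) (fun ωη => hαa ωη.1 ωη.2) ?_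
  · exact (((hlip₁ ωη.1).comp .prod_fst).prodMk ((hlip₂ ωη.2).comp .prod_snd)).weaken (by simp)
  · simpa using ha

section Plane

theorem affineIndependent_of_dist_eq {ι V P : Type*} [NormedAddCommGroup V] [InnerProductSpace ℝ V]
    [MetricSpace P] [NormedAddTorsor V P] {p : ι → P} {d : ℝ} (hd : d ≠ 0)
    (hp : Pairwise fun i j => dist (p i) (p j) = d) : AffineIndependent ℝ p := by
  classical
  intro s w hw hwp
  have hdist (i j : ι) :
      dist (p i) (p j) * dist (p i) (p j) = d * d - if i = j then d * d else 0 := by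
    obtain rfl | hij := eq_or_ne i j
    · rw [dist_self, if_pos rfl, mul_zero, sub_self]
    · rw [hp hij, if_neg hij, sub_zero]
  have hrow : ∀ i ∈ s, ∑ j ∈ s, w i * w j * (dist (p i) (p j) * dist (p i) (p j)) =
      -(d * d) * (w i * w i) := fun i hi => by
    simp only [hdist, mul_sub, Finset.sum_sub_distrib, mul_ite, mul_zero, Finset.sum_ite_eq,
      if_pos hi, ← Finset.sum_mul, ← Finset.mul_sum, hw]
    ring
  have hinner := EuclideanGeometry.inner_weightedVSub p hw p hw
  rw [hwp, inner_zero_left, Finset.sum_congr rfl hrow, ← Finset.mul_sum] at hinner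
  have hsum : ∑ i ∈ s, w i * w i = 0 :=
    (mul_eq_zero.1 (by linarith : d * d * ∑ i ∈ s, w i * w i = 0)).resolve_left
      (mul_self_ne_zero.2 hd)
  exact fun i hi => mul_self_eq_zero.1 <|
    (Finset.sum_eq_zero_iff_of_nonneg fun i _ => mul_self_nonneg (w i)).1 hsum i hi

theorem IsEquilateral.exists_affineBasis {p : Fin 3 → E2} (hp : IsEquilateral p) :
    ∃ b : AffineBasis (Fin 3) ℝ E2, ⇑b = p := by
  have hind : AffineIndependent ℝ p :=
    affineIndependent_of_dist_eq (dist_ne_zero.2 (hp.1.ne zero_ne_one))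
      fun i j hij => hp.2 i j 0 1 hij zero_ne_one
  exact ⟨⟨p, hind, hind.affineSpan_eq_top_iff_card_eq_finrank_add_one.2 (by simp)⟩, rfl⟩

theorem Lmap_eq_midpoint (p : Fin 3 → E2) (i : Fin 3) : Lmap p i = midpoint ℝ (p i) := by
  ext1 t
  rw [Lmap, midpoint_eq_smul_add, invOf_eq_inv, add_comm]

theorem wordMap_eq_wordComp (p : Fin 3 → E2) {n : ℕ} (ω : Fin n → Fin 3) :
    wordMap p ω = wordComp (fun i => midpoint ℝ (p i)) ω := by
  simp only [wordMap, wordComp, Lmap_eq_midpoint]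

theorem IsSG.isSimplexGasket {p : Fin 3 → E2} {S : Set E2} (hS : IsSG p S) :
    IsSimplexGasket p S where
  nonempty := hS.2.1
  isCompact := hS.2.2.1
  eq_iUnion := by simpa only [Lmap_eq_midpoint] using hS.2.2.2

theorem dist_le_dist2 (x y : E2 × E2) : dist x y ≤ dist2 x y :=
  max_le (Real.le_sqrt_of_sq_le (le_add_of_nonneg_right (sq_nonneg _)))
    (Real.le_sqrt_of_sq_le (le_add_of_nonneg_left (sq_nonneg _)))

theorem dist2_le_two_mul_dist (x y : E2 × E2) : dist2 x y ≤ 2 * dist x y := by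
  have hfst : dist x.1 y.1 ≤ dist x y := le_max_left _ _
  have hsnd : dist x.2 y.2 ≤ dist x y := le_max_right _ _
  refine Real.sqrt_le_iff.2 ⟨by positivity, ?_⟩
  calc dist x.1 y.1 ^ 2 + dist x.2 y.2 ^ 2 ≤ dist x y ^ 2 + dist x y ^ 2 := by gcongr
    _ ≤ (2 * dist x y) ^ 2 := by nlinarith [sq_nonneg (dist x y)]

variable {A : Set (E2 × E2)} {g : E2 × E2 → ℝ}

theorem HolderOn2.exists_holderOnWith {K β : ℝ} (hg : HolderOn2 A g K β) (hA : IsBounded A)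
    {σ : ℝ≥0} (hσ : σ ≤ β) : ∃ C, HolderOnWith C σ g A := by
  lift β to ℝ≥0 using σ.coe_nonneg.trans hσ
  refine HolderOnWith.exists_holderOnWith_of_le
    ⟨K.toNNReal * 2 ^ (β : ℝ), holderOnWith_of_dist_le fun x hx y hy => ?_⟩
    (NNReal.coe_le_coe.1 hσ) hA
  calc dist (g x) (g y) ≤ K * dist2 x y ^ (β : ℝ) := hg x hx y hy
    _ ≤ K.toNNReal * (2 * dist x y) ^ (β : ℝ) := by
        gcongr
        · have : 0 ≤ dist2 x y := Real.sqrt_nonneg _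
          positivity
        · exact Real.le_coe_toNNReal K
        · exact Real.sqrt_nonneg _
        · exact dist2_le_two_mul_dist x y
    _ = _ := by
        rw [Real.mul_rpow zero_le_two dist_nonneg]
        push_cast
        ring

theorem holderOn2_of_holderOnWith {C σ : ℝ≥0} (hg : HolderOnWith C σ g A) :
    HolderOn2 A g C σ := fun x hx y hy =>
  (hg.dist_le hx hy).trans (by gcongr; exact dist_le_dist2 x y)

theorem abs_le_iSup_supAbs {J : Type*} [Finite J] {g : J → E2 × E2 → ℝ}
    (hg : ∀ j, IsBounded (g j '' A)) (j : J) {x : E2 × E2} (hx : x ∈ A) :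
    |g j x| ≤ ⨆ j, supAbs A (g j) := by
  obtain ⟨M, hM⟩ := (hg j).exists_norm_le
  have hbdd : BddAbove ((fun x => |g j x|) '' A) :=
    ⟨M, forall_mem_image.2 fun x hx => hM _ (mem_image_of_mem _ hx)⟩
  exact (le_csSup hbdd (mem_image_of_mem _ hx)).trans
    (le_ciSup (f := fun j => supAbs A (g j)) (finite_range _).bddAbove j)

end Plane

/-- If `‖α‖_∞ := max_{ω,η} ‖α_{ωη}‖_∞ < 1/2^N`, then the fractal interpolation
function `f` on `SG' × SG''` is Hölder continuous with exponent
`s = min{s_h, s_α}`, where `s_h` is the (common) Hölder exponent of the maps `h_{ωη}`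
and `s_α = min_{ω,η} s_{α_{ωη}}`. -/
theorem stmt_10 (p q : Fin 3 → E2) (SG' SG'' : Set E2)
    (hSG' : IsSG p SG') (hSG'' : IsSG q SG'') (N : ℕ) (hN : 1 ≤ N)
    (hdiam : ∀ x ∈ SG' ×ˢ SG'', ∀ y ∈ SG' ×ˢ SG'', dist2 x y ≤ 1)
    (α h : Word N → Word N → E2 × E2 → ℝ)
    (f : E2 × E2 → ℝ) (hfc : ContinuousOn f (SG' ×ˢ SG''))
    (hf : ∀ ω η : Word N, ∀ t ∈ SG', ∀ s ∈ SG'',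
      f (wordMap p ω t, wordMap q η s) = α ω η (t, s) * f (t, s) + h ω η (t, s))
    (sh : ℝ) (hsh : 0 < sh ∧ sh ≤ 1) (Kh : ℝ)
    (hhHolder : ∀ ω η, HolderOn2 (SG' ×ˢ SG'') (h ω η) Kh sh)
    (sα : Word N → Word N → ℝ) (hsα : ∀ ω η, 0 < sα ω η ∧ sα ω η ≤ 1)
    (Kα : Word N → Word N → ℝ)
    (hαHolder : ∀ ω η, HolderOn2 (SG' ×ˢ SG'') (α ω η) (Kα ω η) (sα ω η))
    (hαnorm : ∀ ω η, supAbs (SG' ×ˢ SG'') (α ω η) < 1)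
    (hcase : (⨆ ωη : Word N × Word N, supAbs (SG' ×ˢ SG'') (α ωη.1 ωη.2)) < 1 / 2 ^ N) :
    ∃ C : ℝ, HolderOn2 (SG' ×ˢ SG'') f C (min sh (⨅ ωη : Word N × Word N, sα ωη.1 ωη.2)) := by
  obtain ⟨b, rfl⟩ := hSG'.1.exists_affineBasis
  obtain ⟨c, rfl⟩ := hSG''.1.exists_affineBasis
  have hcompact : IsCompact (SG' ×ˢ SG'') := hSG'.2.2.1.prod hSG''.2.2.1
  set s := min sh (⨅ ωη : Word N × Word N, sα ωη.1 ωη.2)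
  have hs₀ : 0 ≤ s := le_min hsh.1.le (le_ciInf fun ωη => (hsα ωη.1 ωη.2).1.le)
  have hsα' (ω η) : s ≤ sα ω η :=
    (min_le_right _ _).trans (ciInf_le (finite_range _).bddBelow (ω, η))
  have hsh' : s ≤ sh := min_le_left _ _
  clear_value s
  lift s to ℝ≥0 using hs₀
  have hα (ω η) : ∃ K, HolderOnWith K s (α ω η) (SG' ×ˢ SG'') :=
    (hαHolder ω η).exists_holderOnWith hcompact.isBounded (hsα' ω η)
  have hαa (ω η) (x) (hx : x ∈ SG' ×ˢ SG'') := abs_le_iSup_supAbs (g := fun ωη => α ωη.1 ωη.2)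
    (fun ωη => isBounded_image_of_holderOnWith (hα ωη.1 ωη.2).choose_spec hcompact.isBounded)
    (ω, η) hx
  have hpow : (1 / 2 ^ N : ℝ) ≤ (1 / 2 ^ N) ^ (s : ℝ) :=
    Real.self_le_rpow_of_le_one (by positivity)
      (div_le_one_of_le₀ (one_le_pow₀ one_le_two) (by positivity)) (hsh'.trans hsh.2)
  obtain ⟨C, hC⟩ := stmt_10_general hSG'.isSimplexGasket hSG''.isSimplexGasket
    (Nat.one_le_iff_ne_zero.1 hN) (hcompact.image_of_continuousOn hfc).isBounded
    (by simpa only [wordMap_eq_wordComp, smul_eq_mul] using hf)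
    (fun ω η => (hhHolder ω η).exists_holderOnWith hcompact.isBounded hsh') hα hαa
    (hcase.trans_le hpow)
  exact ⟨C, holderOn2_of_holderOnWith hC⟩
end
end
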